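/- Let G = (V,E) be a finite connected undirected unweighted graph with m edges, let R = max_{(i,j)∈V²} R_{ij} be the maximal effective resistance between two vertices of G, and let C denote the maximum over starting vertices of the cover time of the simple random walk on G. Then C ≥ m·R. -/

import Mathlib

open Finset

variable {V : Type*}

/-- The total weight incident to a vertex: `ω(i) = Σ_l ω(i,l)`. -/
noncomputable def vWeight [Fintype V] (w : V → V → ℝ) (i : V) : ℝ :=
  ∑ l, w i l

/-- The total weight of the graph (each edge counted once): `ω(G)`. -/
noncomputable def gWeight [Fintype V] (w : V → V → ℝ) : ℝ :=
  (∑ i, ∑ l, w i l) / 2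

/-- Transition probabilities of the random walk on the weighted graph:
from `i`, move to `l` with probability `ω(i,l)/ω(i)`. -/
noncomputable def walkStep [Fintype V] (w : V → V → ℝ) (i l : V) : ℝ :=
  w i l / vWeight w i

/-- `w` is a system of positive symmetric edge weights on a finite connected undirected
graph: symmetric, nonnegative, zero on the diagonal (and on non-edges), and the graph
whose edges are the pairs with positive weight is connected. -/
def IsWeight [Fintype V] (w : V → V → ℝ) : Prop :=
  (∀ a b, w a b = w b a) ∧ (∀ a b, 0 ≤ w a b) ∧ (∀ a, w a a = 0) ∧
    (∀ a b, Relation.ReflTransGen (fun x y => 0 < w x y) a b)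

/-- `hitSurv p j n i` is the probability that the Markov chain with transition kernel `p`
started at `i` has not visited `j` at any of the times `0, 1, …, n`. -/
noncomputable def hitSurv {S : Type*} [Fintype S] [DecidableEq S] (p : S → S → ℝ) (j : S) :
    ℕ → S → ℝ
  | 0 => fun i => if i = j then 0 else 1
  | n + 1 => fun i => if i = j then 0 else ∑ l, p i l * hitSurv p j n l

/-- Expected hitting time of `j` from `i`: the expected number of steps for the chain
started at `i` to first reach `j`, computed as `Σ_n P(T_j > n)`. -/
noncomputable def hitTime {S : Type*} [Fintype S] [DecidableEq S] (p : S → S → ℝ)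
    (i j : S) : ℝ :=
  ∑' n : ℕ, hitSurv p j n i

/-- A unit-current potential from `i` to `j`: Kirchhoff's equations when a unit current
enters at `i` and leaves at `j`. -/
def IsUnitPotential [Fintype V] (w : V → V → ℝ) (i j : V) (φ : V → ℝ) : Prop :=
  (∀ k, k ≠ i → k ≠ j → ∑ l, w k l * (φ k - φ l) = 0) ∧
    (∑ l, w i l * (φ i - φ l) = 1) ∧
    (∑ l, w j l * (φ j - φ l) = -1)

/-- `R` is the effective-resistance matrix of the weighted graph `w`:
`R a a = 0`, and for `a ≠ b`, `R a b = V_a - V_b` for a unit-current potential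
from `a` to `b`. -/
def IsResistance [Fintype V] (w : V → V → ℝ) (R : V → V → ℝ) : Prop :=
  (∀ a, R a a = 0) ∧
    ∀ a b, a ≠ b → ∃ φ, IsUnitPotential w a b φ ∧ R a b = φ a - φ b

/-- The weight function of an unweighted graph: weight `1` on edges, `0` elsewhere. -/
noncomputable def aw (G : SimpleGraph V) [DecidableRel G.Adj] (a b : V) : ℝ :=
  if G.Adj a b then 1 else 0

/-- Probability of a given trajectory: `trajProb p i xs` is the probability that the
chain started at `i` successively visits the vertices of the list `xs`. -/
noncomputable def trajProb {S : Type*} [Fintype S] (p : S → S → ℝ) : S → List S → ℝ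
  | _, [] => 1
  | i, x :: xs => p i x * trajProb p x xs

/-- Probability that the walk started at `i` has not visited every vertex by time `n`. -/
noncomputable def notCoveredProb [Fintype V] [DecidableEq V] (p : V → V → ℝ) (n : ℕ)
    (i : V) : ℝ :=
  ∑ xs : Fin n → V, trajProb p i (List.ofFn xs) *
    (if (i :: List.ofFn xs).toFinset = Finset.univ then 0 else 1)

/-- The cover time from `i`: the expected number of steps for the walk started at `i`
to have visited every vertex, computed as `Σ_n P(T_cov > n)`. -/
noncomputable def coverTime [Fintype V] [DecidableEq V] (p : V → V → ℝ) (i : V) : ℝ :=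
  ∑' n : ℕ, notCoveredProb p n i

/-- `visitSurv p j k n i` is the probability that the chain started at `i` is at `k` at
time `n` without having visited `j` at any of the times `0, …, n`. -/
noncomputable def visitSurv [Fintype V] [DecidableEq V] (p : V → V → ℝ) (j k : V) :
    ℕ → V → ℝ
  | 0 => fun i => if i = j then 0 else if i = k then 1 else 0
  | n + 1 => fun i => if i = j then 0 else ∑ l, p i l * visitSurv p j k n l

/-- `expVisits p i j k` is the expected number of visits to `k` (counting time `0`) of
the chain started at `i` strictly before its first visit to `j`. -/
noncomputable def expVisits [Fintype V] [DecidableEq V] (p : V → V → ℝ) (i j k : V) : ℝ :=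
  ∑' n : ℕ, visitSurv p j k n i

/-- `reachBeforeAux p i j n l` is the probability that the walk started at `l` reaches `j`
within `n` steps without visiting `i` first. -/
noncomputable def reachBeforeAux [Fintype V] [DecidableEq V] (p : V → V → ℝ) (i j : V) :
    ℕ → V → ℝ
  | 0 => fun l => if l = j then 1 else 0
  | n + 1 => fun l =>
      if l = j then 1 else if l = i then 0 else ∑ m, p l m * reachBeforeAux p i j n m

/-- The probability that the walk started at `i` reaches `j` before returning to `i`:
one step from `i` to `l`, then reach `j` before `i` (monotone limit in `n`). -/
noncomputable def escapeProb [Fintype V] [DecidableEq V] (p : V → V → ℝ) (i j : V) : ℝ :=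
  ∑ l, p i l * ⨆ n, reachBeforeAux p i j n l

/-- `hitSurvSet p F n x` is the probability that the chain started at `x` has not visited
the set `F` at any of the times `0, …, n`. -/
noncomputable def hitSurvSet {S : Type*} [Fintype S] (p : S → S → ℝ) (F : S → Prop)
    [DecidablePred F] : ℕ → S → ℝ
  | 0 => fun x => if F x then 0 else 1
  | n + 1 => fun x => if F x then 0 else ∑ y, p x y * hitSurvSet p F n y

/-- Expected hitting time of the set `F` from `x`, computed as `Σ_n P(T_F > n)`. -/
noncomputable def hitTimeSet {S : Type*} [Fintype S] (p : S → S → ℝ) (F : S → Prop)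
    [DecidablePred F] (x : S) : ℝ :=
  ∑' n : ℕ, hitSurvSet p F n x

/-- The associated chain `𝒢` on pairs `(P, i)` (visited set, current vertex): from
`(P, i)` it moves to `(P ∪ {j}, j)` with probability `ω(i,j)/ω(i)`. -/
noncomputable def pairStep [Fintype V] [DecidableEq V] (w : V → V → ℝ)
    (s t : Finset V × V) : ℝ :=
  if t.1 = insert t.2 s.1 then walkStep w s.2 t.2 else 0

/-- `exitProbAux p P j n i` is the probability that the walk started at `i` leaves `P`
within `n` steps and that the first vertex visited outside `P` is `j`. -/
noncomputable def exitProbAux [Fintype V] [DecidableEq V] (p : V → V → ℝ) (P : Finset V)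
    (j : V) : ℕ → V → ℝ
  | 0 => fun i => if i ∈ P then 0 else if i = j then 1 else 0
  | n + 1 => fun i =>
      if i ∈ P then ∑ l, p i l * exitProbAux p P j n l else if i = j then 1 else 0

/-- The probability that the first vertex outside `P` visited by the walk started at `i`
is `j` (monotone limit in the number of allowed steps). -/
noncomputable def exitProb [Fintype V] [DecidableEq V] (p : V → V → ℝ) (P : Finset V)
    (i j : V) : ℝ :=
  ⨆ n, exitProbAux p P j n i

/-- The negated weighted Laplacian `Δ` of the weighted graph `w` on `Fin n`. -/
noncomputable def negLaplacian (n : ℕ) (w : Fin n → Fin n → ℝ) :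
    Matrix (Fin n) (Fin n) ℝ :=
  Matrix.of fun k l => if k = l then -(∑ m, w k m) else w k l

/-- `Δ₂`: the negated weighted Laplacian with its first row replaced by the first row of
the identity matrix. -/
noncomputable def delta2 (n : ℕ) (hn : 0 < n) (w : Fin n → Fin n → ℝ) :
    Matrix (Fin n) (Fin n) ℝ :=
  (negLaplacian n w).updateRow ⟨0, hn⟩ (fun l => if l = ⟨0, hn⟩ then 1 else 0)

/-- The weight function obtained from `w` by adding weight `u` on the edge `{a, b}`. -/
noncomputable def addEdge [DecidableEq V] (w : V → V → ℝ) (a b : V) (u : ℝ)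
    (x y : V) : ℝ :=
  w x y + (if (x = a ∧ y = b) ∨ (x = b ∧ y = a) then u else 0)

section Trajectories

variable [Fintype V]

lemma trajProb_nonneg {p : V → V → ℝ} (hp : ∀ i l, 0 ≤ p i l) (i : V) (xs : List V) :
    0 ≤ trajProb p i xs := by
  induction xs generalizing i with
  | nil => simp [trajProb]
  | cons x xs ih => exact mul_nonneg (hp i x) (ih x)

variable [DecidableEq V]

lemma hitSurv_nonneg {p : V → V → ℝ} (hp : ∀ i l, 0 ≤ p i l) (j : V) (n : ℕ) (i : V) :
    0 ≤ hitSurv p j n i := by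
  induction n generalizing i with
  | zero => simp only [hitSurv]; split_ifs <;> simp
  | succ n ih =>
    simp only [hitSurv]
    split_ifs
    · exact le_rfl
    · exact Finset.sum_nonneg fun l _ => mul_nonneg (hp i l) (ih l)

lemma hitSurv_self (p : V → V → ℝ) (j : V) (n : ℕ) : hitSurv p j n j = 0 := by
  cases n <;> simp [hitSurv]

/-- The survival probability as a sum over trajectories. -/
lemma hitSurv_eq_sum_trajProb (p : V → V → ℝ) (j : V) (n : ℕ) (i : V) :
    hitSurv p j n i = ∑ xs : Fin n → V, trajProb p i (List.ofFn xs) *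
      (if j ∈ i :: List.ofFn xs then 0 else 1) := by
  induction n generalizing i with
  | zero => simp [hitSurv, trajProb, eq_comm]
  | succ n ih =>
    rw [← (Fin.consEquiv fun _ : Fin (n + 1) => V).sum_comp, Fintype.sum_prod_type]
    simp only [hitSurv]
    by_cases hij : i = j
    · simp [hij]
    · have hji : ¬ j = i := fun h => hij h.symm
      rw [if_neg hij]
      refine Finset.sum_congr rfl fun l _ => ?_
      rw [ih, Finset.mul_sum]
      refine Finset.sum_congr rfl fun xs _ => ?_
      simp [Fin.consEquiv, List.ofFn_succ, trajProb, hji]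

lemma notCoveredProb_nonneg {p : V → V → ℝ} (hp : ∀ i l, 0 ≤ p i l) (n : ℕ) (i : V) :
    0 ≤ notCoveredProb p n i :=
  Finset.sum_nonneg fun xs _ =>
    mul_nonneg (trajProb_nonneg hp _ _) (by split_ifs <;> simp)

lemma hitSurv_le_notCoveredProb {p : V → V → ℝ} (hp : ∀ i l, 0 ≤ p i l) (j : V) (n : ℕ)
    (i : V) : hitSurv p j n i ≤ notCoveredProb p n i := by
  rw [hitSurv_eq_sum_trajProb, notCoveredProb]
  refine Finset.sum_le_sum fun xs _ =>
    mul_le_mul_of_nonneg_left ?_ (trajProb_nonneg hp _ _)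
  by_cases hj : j ∈ i :: List.ofFn xs
  · rw [if_pos hj]
    split_ifs <;> simp
  · have hne : (i :: List.ofFn xs).toFinset ≠ Finset.univ := fun h =>
      hj (List.mem_toFinset.1 (h ▸ Finset.mem_univ j))
    rw [if_neg hj, if_neg hne]

lemma notCoveredProb_le_sum_hitSurv {p : V → V → ℝ} (hp : ∀ i l, 0 ≤ p i l) (n : ℕ) (i : V) :
    notCoveredProb p n i ≤ ∑ j, hitSurv p j n i := by
  simp only [hitSurv_eq_sum_trajProb]
  rw [notCoveredProb, Finset.sum_comm]
  refine Finset.sum_le_sum fun xs _ => ?_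
  rw [← Finset.mul_sum]
  refine mul_le_mul_of_nonneg_left ?_ (trajProb_nonneg hp _ _)
  have hnn : ∀ j ∈ Finset.univ, (0 : ℝ) ≤ if j ∈ i :: List.ofFn xs then 0 else 1 := by
    intro j _
    split_ifs <;> simp
  by_cases h : (i :: List.ofFn xs).toFinset = Finset.univ
  · rw [if_pos h]
    exact Finset.sum_nonneg hnn
  · obtain ⟨j, hj⟩ : ∃ j, j ∉ (i :: List.ofFn xs).toFinset := by
      by_contra! hall
      exact h (Finset.eq_univ_of_forall hall)
    rw [List.mem_toFinset] at hj
    have hle := Finset.single_le_sum hnn (Finset.mem_univ j)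
    rw [if_neg hj] at hle
    rwa [if_neg h]

end Trajectories

section Weights

variable [Fintype V] {w : V → V → ℝ}

lemma IsWeight.vWeight_nonneg (hw : IsWeight w) (i : V) : 0 ≤ vWeight w i :=
  Finset.sum_nonneg fun l _ => hw.2.1 i l

lemma IsWeight.walkStep_nonneg (hw : IsWeight w) (i l : V) : 0 ≤ walkStep w i l :=
  div_nonneg (hw.2.1 i l) (hw.vWeight_nonneg i)

lemma IsWeight.vWeight_mul_walkStep (hw : IsWeight w) (i l : V) :
    vWeight w i * walkStep w i l = w i l := by
  by_cases h : vWeight w i = 0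
  · have hil : w i l = 0 :=
      (Finset.sum_eq_zero_iff_of_nonneg fun m _ => hw.2.1 i m).1 h l (Finset.mem_univ l)
    simp [h, hil]
  · rw [walkStep, mul_div_cancel₀ _ h]

/-- The weighted Laplacian is self-adjoint. -/
lemma IsWeight.sum_mul_laplacian_comm (hw : IsWeight w) (f g : V → ℝ) :
    ∑ k, f k * ∑ l, w k l * (g k - g l) = ∑ k, g k * ∑ l, w k l * (f k - f l) := by
  have key : ∀ f g : V → ℝ, ∑ k, f k * ∑ l, w k l * (g k - g l) =
      ∑ k, ∑ l, w k l * (f k * g k) - ∑ k, ∑ l, w k l * (f k * g l) := by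
    intro f g
    rw [← Finset.sum_sub_distrib]
    refine Finset.sum_congr rfl fun k _ => ?_
    rw [Finset.mul_sum, ← Finset.sum_sub_distrib]
    exact Finset.sum_congr rfl fun l _ => by ring
  rw [key, key]
  congr 1
  · exact Finset.sum_congr rfl fun k _ => Finset.sum_congr rfl fun l _ => by ring
  · rw [Finset.sum_comm]
    refine Finset.sum_congr rfl fun k _ => Finset.sum_congr rfl fun l _ => ?_
    rw [hw.1 l k]
    ring

lemma IsUnitPotential.sum_mul_laplacian {a b : V} {φ : V → ℝ} (hφ : IsUnitPotential w a b φ)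
    (hab : a ≠ b) (f : V → ℝ) : ∑ k, f k * ∑ l, w k l * (φ k - φ l) = f a - f b := by
  rw [Fintype.sum_eq_add a b hab fun k hk => by rw [hφ.1 k hk.1 hk.2, mul_zero],
    hφ.2.1, hφ.2.2]
  ring

variable [DecidableEq V]

lemma IsWeight.vWeight_mul_hitSurv_succ (hw : IsWeight w) {j i : V} (hij : i ≠ j) (n : ℕ) :
    vWeight w i * hitSurv (walkStep w) j (n + 1) i =
      ∑ l, w i l * hitSurv (walkStep w) j n l := by
  simp only [hitSurv, if_neg hij]
  rw [Finset.mul_sum]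
  exact Finset.sum_congr rfl fun l _ => by rw [← mul_assoc, hw.vWeight_mul_walkStep]

/-- The stationary mass absorbed at `j` in one step is the decrease of the surviving mass. -/
lemma IsWeight.sum_mul_hitSurv_eq_sub (hw : IsWeight w) (j : V) (n : ℕ) :
    ∑ l, w j l * hitSurv (walkStep w) j n l =
      ∑ i, vWeight w i * hitSurv (walkStep w) j n i -
        ∑ i, vWeight w i * hitSurv (walkStep w) j (n + 1) i := by
  have h : ∑ i, vWeight w i * hitSurv (walkStep w) j n i =
      ∑ i, ∑ l, w i l * hitSurv (walkStep w) j n l := by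
    rw [Finset.sum_comm]
    refine Finset.sum_congr rfl fun l _ => ?_
    rw [← Finset.sum_mul, vWeight]
    exact congrArg (· * _) (Finset.sum_congr rfl fun i _ => hw.1 l i)
  rw [h, ← Finset.sum_sub_distrib]
  symm
  rw [Fintype.sum_eq_single j fun i hij => by rw [hw.vWeight_mul_hitSurv_succ hij, sub_self],
    hitSurv_self, mul_zero, sub_zero]

lemma IsWeight.summable_sum_mul_hitSurv (hw : IsWeight w) (j : V) :
    Summable fun n => ∑ l, w j l * hitSurv (walkStep w) j n l := by
  have hnn := hitSurv_nonneg hw.walkStep_nonneg j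
  refine summable_of_sum_range_le
    (c := ∑ i, vWeight w i * hitSurv (walkStep w) j 0 i)
    (fun n => Finset.sum_nonneg fun l _ => mul_nonneg (hw.2.1 j l) (hnn n l)) fun N => ?_
  simp only [hw.sum_mul_hitSurv_eq_sub]
  rw [Finset.sum_range_sub' fun n => ∑ i, vWeight w i * hitSurv (walkStep w) j n i]
  exact sub_le_self _
    (Finset.sum_nonneg fun i _ => mul_nonneg (hw.vWeight_nonneg i) (hnn N i))

lemma IsWeight.summable_hitSurv (hw : IsWeight w) (i j : V) :
    Summable fun n => hitSurv (walkStep w) j n i := by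
  have hnn := hitSurv_nonneg hw.walkStep_nonneg j
  induction hw.2.2.2 j i with
  | refl => simpa only [hitSurv_self] using summable_zero
  | @tail x y _ hxy ih =>
    suffices h : Summable fun n => ∑ l, w x l * hitSurv (walkStep w) j n l by
      rw [← summable_mul_left_iff hxy.ne']
      exact Summable.of_nonneg_of_le (fun n => mul_nonneg hxy.le (hnn n y))
        (fun n => Finset.single_le_sum (f := fun l => w x l * hitSurv (walkStep w) j n l)
          (fun l _ => mul_nonneg (hw.2.1 x l) (hnn n l)) (Finset.mem_univ y)) h
    by_cases hx : x = j
    · rw [hx]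
      exact hw.summable_sum_mul_hitSurv j
    · simp only [← hw.vWeight_mul_hitSurv_succ hx]
      exact ((summable_nat_add_iff 1).2 ih).mul_left _

lemma hitTime_self (p : V → V → ℝ) (j : V) : hitTime p j j = 0 := by
  simp [hitTime, hitSurv_self]

lemma IsWeight.vWeight_mul_hitTime (hw : IsWeight w) {i j : V} (hij : i ≠ j) :
    vWeight w i * hitTime (walkStep w) i j =
      vWeight w i + ∑ l, w i l * hitTime (walkStep w) l j := by
  rw [hitTime, (hw.summable_hitSurv i j).tsum_eq_zero_add, mul_add, ← tsum_mul_left]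
  simp only [hw.vWeight_mul_hitSurv_succ hij]
  rw [Summable.tsum_finsetSum fun l _ => (hw.summable_hitSurv l j).mul_left _]
  simp [tsum_mul_left, hitTime, hitSurv, hij]

lemma IsWeight.laplacian_hitTime (hw : IsWeight w) (j k : V) :
    ∑ l, w k l * (hitTime (walkStep w) k j - hitTime (walkStep w) l j) =
      vWeight w k - if k = j then 2 * gWeight w else 0 := by
  have hne : ∀ k, k ≠ j →
      ∑ l, w k l * (hitTime (walkStep w) k j - hitTime (walkStep w) l j) = vWeight w k := by
    intro k hk
    simp only [mul_sub, Finset.sum_sub_distrib]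
    rw [← Finset.sum_mul, ← vWeight, hw.vWeight_mul_hitTime hk]
    ring
  by_cases hk : k = j
  · subst hk
    have hsum := hw.sum_mul_laplacian_comm (fun _ => 1) fun l => hitTime (walkStep w) l k
    simp only [one_mul, sub_self, mul_zero, Finset.sum_const_zero] at hsum
    have hG : 2 * gWeight w = ∑ i, vWeight w i := by
      simp only [gWeight, vWeight]
      ring
    rw [← Finset.add_sum_erase _ _ (Finset.mem_univ k),
      Finset.sum_congr rfl fun i hi => hne i (Finset.ne_of_mem_erase hi)] at hsum
    rw [if_pos rfl, hG, ← Finset.add_sum_erase _ (vWeight w) (Finset.mem_univ k)]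
    linarith
  · rw [hne k hk, if_neg hk, sub_zero]

/-- The commute time identity. -/
lemma IsWeight.hitTime_add_hitTime (hw : IsWeight w) {a b : V} (hab : a ≠ b) {φ : V → ℝ}
    (hφ : IsUnitPotential w a b φ) :
    hitTime (walkStep w) a b + hitTime (walkStep w) b a = 2 * gWeight w * (φ a - φ b) := by
  have key : ∀ j, hitTime (walkStep w) a j - hitTime (walkStep w) b j =
      ∑ k, φ k * vWeight w k - φ j * (2 * gWeight w) := by
    intro j
    rw [← hφ.sum_mul_laplacian hab fun k => hitTime (walkStep w) k j,
      hw.sum_mul_laplacian_comm]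
    simp only [hw.laplacian_hitTime]
    simp [mul_sub]
  have ha := key a
  have hb := key b
  rw [hitTime_self] at ha hb
  linarith

lemma IsWeight.hitTime_le_coverTime (hw : IsWeight w) (i j : V) :
    hitTime (walkStep w) i j ≤ coverTime (walkStep w) i := by
  have hp := hw.walkStep_nonneg
  have hsum : Summable fun n => notCoveredProb (walkStep w) n i :=
    Summable.of_nonneg_of_le (fun n => notCoveredProb_nonneg hp n i)
      (fun n => notCoveredProb_le_sum_hitSurv hp n i)
      (summable_sum fun j _ => hw.summable_hitSurv i j)
  exact (hw.summable_hitSurv i j).tsum_le_tsum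
    (fun n => hitSurv_le_notCoveredProb hp j n i) hsum

lemma IsWeight.coverTime_nonneg (hw : IsWeight w) (i : V) : 0 ≤ coverTime (walkStep w) i :=
  tsum_nonneg fun n => notCoveredProb_nonneg hw.walkStep_nonneg n i

lemma IsWeight.gWeight_mul_resistance_le (hw : IsWeight w) {R : V → V → ℝ}
    (hR : IsResistance w R) (a b : V) :
    gWeight w * R a b ≤ ⨆ i, coverTime (walkStep w) i := by
  by_cases hab : a = b
  · rw [hab, hR.1, mul_zero]
    exact Real.iSup_nonneg hw.coverTime_nonneg
  · obtain ⟨φ, hφ, hRφ⟩ := hR.2 a b hab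
    have hcomm := hw.hitTime_add_hitTime hab hφ
    have hle : ∀ i, coverTime (walkStep w) i ≤ ⨆ i, coverTime (walkStep w) i :=
      le_ciSup (Set.finite_range _).bddAbove
    have ha := (hw.hitTime_le_coverTime a b).trans (hle a)
    have hb := (hw.hitTime_le_coverTime b a).trans (hle b)
    rw [hRφ]
    linarith

end Weights

lemma isWeight_aw [Fintype V] (G : SimpleGraph V) [DecidableRel G.Adj] (hG : G.Connected) :
    IsWeight (aw G) := by
  refine ⟨fun a b => by simp [aw, G.adj_comm], fun a b => ?_, fun a => by simp [aw],
    fun a b => ?_⟩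
  · rw [aw]
    split_ifs <;> simp
  · have h := (SimpleGraph.reachable_iff_reflTransGen a b).1 (hG.preconnected a b)
    exact Relation.ReflTransGen.mono (fun x y hxy => by simp [aw, hxy]) _ _ h

lemma gWeight_aw [Fintype V] (G : SimpleGraph V) [DecidableRel G.Adj] :
    gWeight (aw G) = G.edgeFinset.card := by
  have hdeg : ∀ i, ∑ l, aw G i l = G.degree i := fun i => by
    simp [aw, ← SimpleGraph.card_neighborFinset_eq_degree, SimpleGraph.neighborFinset_eq_filter]
  have h := G.sum_degrees_eq_twice_card_edges
  rw [gWeight, Finset.sum_congr rfl fun i _ => hdeg i, ← Nat.cast_sum, h]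
  push_cast
  ring

/-- The cover time of a connected unweighted graph is at least `m·R`,
where `R` is the maximal effective resistance. -/
theorem cover_time_lower_bound
    {V : Type*} [Fintype V] [DecidableEq V] (G : SimpleGraph V) [DecidableRel G.Adj]
    (hG : G.Connected) (R : V → V → ℝ) (hR : IsResistance (aw G) R) :
    (G.edgeFinset.card : ℝ) * (⨆ a, ⨆ b, R a b) ≤
      ⨆ i, coverTime (walkStep (aw G)) i := by
  have := hG.nonempty
  have hm : (0 : ℝ) ≤ G.edgeFinset.card := Nat.cast_nonneg _
  rw [Real.mul_iSup_of_nonneg hm]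
  refine ciSup_le fun a => ?_
  rw [Real.mul_iSup_of_nonneg hm]
  refine ciSup_le fun b => ?_
  rw [← gWeight_aw]
  exact (isWeight_aw G hG).gWeight_mul_resistance_le hR a b
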